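/- For any k ≥ 3 and any H ≤ D, ∑_{1 ≤ d_1 < d_2 < ... < d_{k-2} < H} S({0, d_1, ..., d_{k-2}, D}) = S({0, D}) · H^{k-2}/(k-2)! · (1 + O_k(D^ε/H^{1/2})). -/

import Mathlib

open Finset

/-- Number of residue classes mod `p` occupied by the elements of `D`. -/
def nu (D : Finset ℕ) (p : ℕ) : ℕ := (D.image (· % p)).card

/-- The Hardy–Littlewood singular series of a finite set `D`. -/
noncomputable def singSeries (D : Finset ℕ) : ℝ :=
  ∏' p : Nat.Primes, ((1 - 1 / ((p : ℕ) : ℝ)) ^ D.card)⁻¹ * (1 - (nu D (p : ℕ) : ℝ) / ((p : ℕ) : ℝ))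

/-- `primePi x D` counts positive integers `m ≤ x` with `m + d` prime for all `d ∈ D`. -/
noncomputable def primePi (x : ℝ) (D : Finset ℕ) : ℕ :=
  {m : ℕ | 0 < m ∧ (m : ℝ) ≤ x ∧ ∀ d ∈ D, Nat.Prime (m + d)}.ncard

/-- `Ncham x D` counts `n` such that `p_{n+k} ≤ x` and the gaps `p_{n+i} - p_n` for
`i = 1, …, k` are exactly the elements of `D` (with `k = D.card`). -/
noncomputable def Ncham (x : ℝ) (D : Finset ℕ) : ℕ :=
  {n : ℕ | ((Nat.nth Nat.Prime (n + D.card) : ℝ) ≤ x) ∧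
    (Finset.range D.card).image
      (fun i => Nat.nth Nat.Prime (n + i + 1) - Nat.nth Nat.Prime n) = D}.ncard

/-- `D` is a `k`-tuple jumping champion for `x`. -/
def IsChampion (k : ℕ) (x : ℝ) (D : Finset ℕ) : Prop :=
  D.card = k ∧ (∀ d ∈ D, 0 < d) ∧
    ∀ D' : Finset ℕ, D'.card = k → (∀ d ∈ D', 0 < d) → Ncham x D' ≤ Ncham x D

/-- Number of prime factors counted with multiplicity. -/
def bigOmega (n : ℕ) : ℕ := n.primeFactorsList.length

/-- The `n`-th primorial `2·3·5⋯p_n`. -/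
noncomputable def primorial' (n : ℕ) : ℕ := ∏ i ∈ Finset.range n, Nat.nth Nat.Prime i

/-- The largest primorial not exceeding `y` (equal to `1` if `y < 1`). -/
noncomputable def largestPrimorial (y : ℝ) : ℕ :=
  primorial' (sSup {n : ℕ | (primorial' n : ℝ) ≤ y})

/-- Local factor of the singular series. -/
noncomputable def fac (A : Finset ℕ) (p : ℕ) : ℝ :=
  ((1 - 1 / (p : ℝ)) ^ A.card)⁻¹ * (1 - (nu A p : ℝ) / (p : ℝ))

/-- Relative change of the local factor when `d` is added to `A`. -/
noncomputable def ff (A : Finset ℕ) (p d : ℕ) : ℝ :=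
  if d % p ∈ A.image (· % p) then 1 / ((p : ℝ) - 1)
  else -((nu A p : ℝ) / (((p : ℝ) - 1) * ((p : ℝ) - nu A p)))

lemma nu_le (A : Finset ℕ) (p : ℕ) (hp : 0 < p) : nu A p ≤ p := by
  have : A.image (· % p) ⊆ range p := by
    intro x hx
    simp only [Finset.mem_image] at hx
    obtain ⟨a, _, rfl⟩ := hx
    exact Finset.mem_range.2 (Nat.mod_lt _ hp)
  simpa [nu] using Finset.card_le_card this

lemma nu_le_card (A : Finset ℕ) (p : ℕ) : nu A p ≤ A.card := Finset.card_image_le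

lemma nu_insert (A : Finset ℕ) (p d : ℕ) :
    nu (insert d A) p = if d % p ∈ A.image (· % p) then nu A p else nu A p + 1 := by
  unfold nu
  rw [Finset.image_insert]
  split_ifs with h
  · rw [Finset.insert_eq_of_mem h]
  · rw [Finset.card_insert_of_notMem h]

lemma fac_nonneg (A : Finset ℕ) (p : ℕ) (hp : 2 ≤ p) : 0 ≤ fac A p := by
  have hp' : (2 : ℝ) ≤ p := by exact_mod_cast hp
  have h1 : (nu A p : ℝ) ≤ p := by exact_mod_cast nu_le A p (by omega)
  unfold fac
  have h2 : 1 / (p : ℝ) ≤ 1 := by rw [div_le_one (by linarith)]; linarith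
  have h3 : (nu A p : ℝ) / p ≤ 1 := by rw [div_le_one (by linarith)]; linarith
  have : 0 ≤ 1 - 1 / (p : ℝ) := by linarith
  have : 0 ≤ 1 - (nu A p : ℝ) / p := by linarith
  positivity

lemma fac_insert (A : Finset ℕ) (p d : ℕ) (hp : 2 ≤ p) (hd : d ∉ A) (hn : nu A p < p) :
    fac (insert d A) p = fac A p * (1 + ff A p d) := by
  have hp' : (2 : ℝ) ≤ p := by exact_mod_cast hp
  have h1 : (nu A p : ℝ) < p := by exact_mod_cast hn
  have h2 : (p : ℝ) - 1 ≠ 0 := by linarith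
  have h3 : (p : ℝ) - nu A p ≠ 0 := by linarith
  have h4 : (p : ℝ) ≠ 0 := by linarith
  have h5 : 1 - 1 / (p : ℝ) = ((p : ℝ) - 1) / p := by field_simp
  have h6 : (((p : ℝ) - 1) / p) ≠ 0 := div_ne_zero h2 h4
  unfold fac ff
  rw [nu_insert, Finset.card_insert_of_notMem hd, h5, pow_succ, mul_inv, mul_assoc, mul_assoc]
  congr 1
  split_ifs
  · field_simp
    ring
  · push_cast
    field_simp
    ring

lemma fac_insert_zero (A : Finset ℕ) (p d : ℕ) (hp : 2 ≤ p) (hn : nu A p = p) :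
    fac (insert d A) p = 0 := by
  have h1 := nu_le (insert d A) p (by omega)
  have h2 : nu (insert d A) p = p := by
    rw [nu_insert] at h1 ⊢
    split_ifs at h1 ⊢ <;> omega
  have h4 : (p : ℝ) ≠ 0 := by positivity
  unfold fac
  rw [h2, div_self h4]; simp

lemma fac_zero (A : Finset ℕ) (p : ℕ) (hp : 2 ≤ p) (hn : nu A p = p) :
    fac A p = 0 := by
  have h4 : (p : ℝ) ≠ 0 := by positivity
  unfold fac
  rw [hn, div_self h4]; simp

lemma ff_mod (A : Finset ℕ) (p d : ℕ) : ff A p (d % p) = ff A p d := by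
  unfold ff; simp

lemma filter_bad (A : Finset ℕ) (p : ℕ) (hp : 0 < p) :
    ((range p).filter (fun d => d % p ∈ A.image (· % p))) = A.image (· % p) := by
  ext x
  simp only [Finset.mem_filter, Finset.mem_range]
  constructor
  · rintro ⟨h, h2⟩; rwa [Nat.mod_eq_of_lt h] at h2
  · intro h
    have hx : x < p := by
      simp only [Finset.mem_image] at h
      obtain ⟨a, _, rfl⟩ := h
      exact Nat.mod_lt _ hp
    exact ⟨hx, by rwa [Nat.mod_eq_of_lt hx]⟩

lemma sum_ite_bad (A : Finset ℕ) (p : ℕ) (hp : 0 < p) (u v : ℝ) :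
    ∑ d ∈ range p, (if d % p ∈ A.image (· % p) then u else v)
      = nu A p * u + (p - nu A p) * v := by
  have h := Finset.sum_boole (R := ℝ) (fun d => d % p ∈ A.image (· % p)) (range p)
  rw [filter_bad A p hp] at h
  have : ∀ d ∈ range p, (if d % p ∈ A.image (· % p) then u else v)
      = (if d % p ∈ A.image (· % p) then (1:ℝ) else 0) * (u - v) + v := by
    intro d _; split_ifs <;> ring
  rw [Finset.sum_congr rfl this, Finset.sum_add_distrib, ← Finset.sum_mul, h]
  simp only [nu, Finset.sum_const, Finset.card_range, nsmul_eq_mul]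
  ring

lemma sum_ff (A : Finset ℕ) (p : ℕ) (hp : 2 ≤ p) (hn : nu A p < p) :
    ∑ d ∈ range p, ff A p d = 0 := by
  have hp' : (2 : ℝ) ≤ p := by exact_mod_cast hp
  have h1 : (nu A p : ℝ) < p := by exact_mod_cast hn
  have h2 : (p : ℝ) - 1 ≠ 0 := by linarith
  have h3 : (p : ℝ) - nu A p ≠ 0 := by linarith
  unfold ff
  rw [sum_ite_bad A p (by omega)]
  field_simp
  ring

lemma sum_abs_ff (A : Finset ℕ) (p : ℕ) (hp : 2 ≤ p) (hn : nu A p < p) :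
    ∑ d ∈ range p, |ff A p d| ≤ 4 * A.card / p := by
  have hp' : (2 : ℝ) ≤ p := by exact_mod_cast hp
  have h1 : (nu A p : ℝ) < p := by exact_mod_cast hn
  have h1' : (nu A p : ℝ) ≤ A.card := by exact_mod_cast nu_le_card A p
  have h2 : 0 < (p : ℝ) - 1 := by linarith
  have h3 : 0 < (p : ℝ) - nu A p := by linarith
  have h0 : (0:ℝ) ≤ nu A p := by positivity
  unfold ff
  have : ∀ d ∈ range p, |(if d % p ∈ A.image (· % p) then 1 / ((p : ℝ) - 1)
      else -((nu A p : ℝ) / (((p : ℝ) - 1) * ((p : ℝ) - nu A p))))|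
      = (if d % p ∈ A.image (· % p) then 1 / ((p : ℝ) - 1)
      else ((nu A p : ℝ) / (((p : ℝ) - 1) * ((p : ℝ) - nu A p)))) := by
    intro d _
    split_ifs
    · rw [abs_of_nonneg (by positivity)]
    · rw [abs_neg, abs_of_nonneg (by positivity)]
  rw [Finset.sum_congr rfl this, sum_ite_bad A p (by omega)]
  have : (nu A p : ℝ) * (1 / ((p:ℝ) - 1)) + (p - nu A p) * ((nu A p : ℝ) / (((p : ℝ) - 1) * ((p : ℝ) - nu A p))) = 2 * nu A p / (p - 1) := by
    have h2 := h2.ne'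
    have h3 := h3.ne'
    field_simp; ring
  rw [this, div_le_div_iff₀ h2 (by linarith)]
  have : 0 ≤ (A.card - nu A p : ℝ) * (p - 1) := mul_nonneg (by linarith) h2.le
  have : 0 ≤ (A.card : ℝ) * (p - 2) := mul_nonneg (by positivity) (by linarith)
  nlinarith

lemma ff_bad (A : Finset ℕ) (p d : ℕ) (hp : 2 ≤ p) (hb : d % p ∈ A.image (· % p)) :
    |ff A p d| ≤ 2 / p := by
  have hp' : (2 : ℝ) ≤ p := by exact_mod_cast hp
  have h2 : 0 < (p : ℝ) - 1 := by linarith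
  unfold ff
  rw [if_pos hb, abs_of_nonneg (by positivity), div_le_div_iff₀ h2 (by linarith)]
  linarith

lemma ff_good (A : Finset ℕ) (p d : ℕ) (hp : 2 ≤ p) (hn : nu A p < p)
    (hb : d % p ∉ A.image (· % p)) :
    |ff A p d| ≤ (2 * A.card * (A.card + 1)) / (p * p) := by
  have hp' : (2 : ℝ) ≤ p := by exact_mod_cast hp
  have h1 : (nu A p : ℝ) + 1 ≤ p := by exact_mod_cast hn
  have h1' : (nu A p : ℝ) ≤ A.card := by exact_mod_cast nu_le_card A p
  have h2 : 0 < (p : ℝ) - 1 := by linarith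
  have h3 : 0 < (p : ℝ) - nu A p := by linarith
  have h0 : (0:ℝ) ≤ nu A p := by positivity
  unfold ff
  rw [if_neg hb, abs_neg, abs_of_nonneg (by positivity)]
  have e1 : (1:ℝ) / (p - 1) ≤ 2 / p := by
    rw [div_le_div_iff₀ h2 (by linarith)]; linarith
  have e2 : (1:ℝ) / (p - nu A p) ≤ (A.card + 1) / p := by
    rw [div_le_div_iff₀ h3 (by linarith)]
    have : 0 ≤ (A.card - nu A p : ℝ) * (p - nu A p) := mul_nonneg (by linarith) h3.le
    nlinarith
  calc (nu A p : ℝ) / (((p : ℝ) - 1) * ((p : ℝ) - nu A p))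
      = nu A p * ((1 / (p - 1)) * (1 / (p - nu A p))) := by
        have h2 := h2.ne'
        have h3 := h3.ne'
        field_simp
    _ ≤ A.card * ((2 / p) * ((A.card + 1) / p)) := by gcongr
    _ = _ := by field_simp

lemma crt_sum (m n : ℕ) (hm : 0 < m) (hn : 0 < n) (hc : m.Coprime n) (F G : ℕ → ℝ)
    (hF : ∀ x, F (x % m) = F x) (hG : ∀ x, G (x % n) = G x) :
    ∑ x ∈ range (m * n), F x * G x = (∑ x ∈ range m, F x) * ∑ x ∈ range n, G x := by
  rw [Finset.sum_mul_sum, ← Finset.sum_product']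
  refine Finset.sum_nbij (fun x => (x % m, x % n)) ?_ ?_ ?_ ?_
  · intro x _
    simp [Nat.mod_lt, hm, hn]
  · intro x hx y hy hxy
    simp only [Finset.coe_range, Set.mem_Iio, Prod.mk.injEq] at hx hy hxy
    have := (Nat.modEq_and_modEq_iff_modEq_mul hc).1 ⟨hxy.1, hxy.2⟩
    exact Nat.ModEq.eq_of_lt_of_lt this hx hy
  · rintro ⟨a, b⟩ hab
    simp only [Finset.coe_product, Finset.coe_range, Set.mem_prod, Set.mem_Iio] at hab
    have h1 := (Nat.chineseRemainder hc a b).2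
    refine ⟨Nat.chineseRemainder hc a b, ?_, ?_⟩
    · simpa using Nat.chineseRemainder_lt_mul hc a b hm.ne' hn.ne'
    · exact Prod.ext (Eq.trans h1.1 (Nat.mod_eq_of_lt hab.1)) (Eq.trans h1.2 (Nat.mod_eq_of_lt hab.2))
  · intro x _
    simp [hF, hG]

lemma periodic_sum (q : ℕ) (hq : 0 < q) (F : ℕ → ℝ) (hF : ∀ x, F (x % q) = F x)
    (h0 : ∑ x ∈ range q, F x = 0) (H : ℕ) :
    |∑ x ∈ range H, F x| ≤ ∑ x ∈ range q, |F x| := by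
  have key : ∀ m r, ∑ x ∈ range (q * m + r), F x = ∑ x ∈ range r, F x := by
    intro m
    induction m with
    | zero => intro r; simp
    | succ m ih =>
      intro r
      have : q * (m + 1) + r = q + (q * m + r) := by ring
      rw [this, Finset.sum_range_add, h0, zero_add, ← ih r]
      refine Finset.sum_congr rfl fun x _ => ?_
      rw [← hF (q + x), Nat.add_mod_left, hF]
  rw [← Nat.div_add_mod H q, key]
  refine (Finset.abs_sum_le_sum_abs _ _).trans ?_
  refine Finset.sum_le_sum_of_subset_of_nonneg ?_ (fun _ _ _ => abs_nonneg _)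
  exact Finset.range_subset_range.2 (Nat.mod_lt _ hq).le

lemma coprime_prod (t : Finset Nat.Primes) (p : Nat.Primes) (hp : p ∉ t) :
    (p : ℕ).Coprime (∏ x ∈ t, (x : ℕ)) := by
  refine Nat.Coprime.prod_right fun x hx => ?_
  refine (Nat.coprime_primes p.2 x.2).2 fun h => hp ?_
  rwa [Subtype.ext h]

lemma prod_mod (t : Finset Nat.Primes) (F : ℕ → ℕ → ℝ) (hF : ∀ p x, F p (x % p) = F p x) (x : ℕ) :
    ∏ p ∈ t, F p (x % (∏ p ∈ t, (p : ℕ))) = ∏ p ∈ t, F p x := by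
  refine Finset.prod_congr rfl fun p hp => ?_
  rw [← hF p (x % _), Nat.mod_mod_of_dvd _ (Finset.dvd_prod_of_mem _ hp), hF]

lemma prod_sum (t : Finset Nat.Primes) (F : ℕ → ℕ → ℝ) (hF : ∀ p x, F p (x % p) = F p x) :
    ∑ x ∈ range (∏ p ∈ t, (p : ℕ)), ∏ p ∈ t, F p x = ∏ p ∈ t, ∑ x ∈ range p, F p x := by
  classical
  induction t using Finset.induction_on with
  | empty => simp
  | insert p t hp ih =>
    simp only [Finset.prod_insert hp]
    rw [crt_sum p (∏ x ∈ t, (x : ℕ)) p.2.pos (Finset.prod_pos fun x _ => x.2.pos)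
      (coprime_prod t p hp) (F p) (fun x => ∏ p ∈ t, F p x) (hF p) (prod_mod t F hF), ih]

lemma period_bound (A : Finset ℕ) (hn : ∀ p : Nat.Primes, nu A p < p)
    (t : Finset Nat.Primes)
    (ht : t.Nonempty) (H : ℕ) :
    |∑ x ∈ range H, ∏ p ∈ t, ff A p x| ≤ ∏ p ∈ t, (4 * A.card / (p : ℝ)) := by
  have h0 : ∑ x ∈ range (∏ p ∈ t, (p : ℕ)), ∏ p ∈ t, ff A p x = 0 := by
    rw [prod_sum t (ff A) (ff_mod A)]
    obtain ⟨p, hp⟩ := ht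
    exact Finset.prod_eq_zero hp (sum_ff A p p.2.two_le (hn p))
  refine (periodic_sum _ (Finset.prod_pos fun x _ => x.2.pos) _ (prod_mod t (ff A) (ff_mod A)) h0
    H).trans ?_
  simp only [Finset.abs_prod]
  rw [prod_sum t (fun p x => |ff A p x|) (fun p x => by rw [ff_mod])]
  refine Finset.prod_le_prod (fun p _ => Finset.sum_nonneg fun _ _ => abs_nonneg _) fun p _ => ?_
  exact sum_abs_ff A p p.2.two_le (hn p)

lemma period_bound' (A : Finset ℕ) (hA : 1 ≤ A.card) (hn : ∀ p : Nat.Primes, nu A p < p)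
    (t : Finset Nat.Primes)
    (ht : t.Nonempty) (H : ℕ) :
    |∑ x ∈ range H \ A, ∏ p ∈ t, ff A p x| ≤ (A.card + 1) * ∏ p ∈ t, (4 * A.card / (p : ℝ)) := by
  have h1 := period_bound A hn t ht H
  have hA' : (1:ℝ) ≤ A.card := by exact_mod_cast hA
  rw [← Finset.sum_inter_add_sum_sdiff (range H) A] at h1
  have h2 : |∑ x ∈ range H ∩ A, ∏ p ∈ t, ff A p x| ≤ A.card * ∏ p ∈ t, (4 * A.card / (p : ℝ)) := by
    have h3 : ∀ x ∈ range H ∩ A, |∏ p ∈ t, ff A p x| ≤ ∏ p ∈ t, (4 * A.card / (p : ℝ)) := by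
      intro x hx
      rw [Finset.abs_prod]
      refine Finset.prod_le_prod (fun p _ => abs_nonneg _) fun p _ => ?_
      refine (ff_bad A p x p.2.two_le
        (Finset.mem_image_of_mem _ (Finset.mem_inter.1 hx).2)).trans ?_
      gcongr
      linarith
    refine (Finset.abs_sum_le_sum_abs _ _).trans ((Finset.sum_le_sum h3).trans ?_)
    rw [Finset.sum_const, nsmul_eq_mul]
    have : (#(range H ∩ A) : ℝ) ≤ A.card := by
      exact_mod_cast Finset.card_le_card Finset.inter_subset_right
    refine mul_le_mul_of_nonneg_right this (Finset.prod_nonneg fun p _ => by positivity)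
  rw [abs_le] at *
  constructor <;> linarith [h1.1, h1.2, h2.1, h2.2]

lemma one_le_prod_real {ι : Type*} {s : Finset ι} {f : ι → ℝ} (h : ∀ i ∈ s, 1 ≤ f i) :
    1 ≤ ∏ i ∈ s, f i := by
  calc (1:ℝ) = ∏ i ∈ s, (1:ℝ) := by simp
    _ ≤ _ := Finset.prod_le_prod (fun _ _ => by norm_num) h

lemma summable_pp : Summable (fun p : Nat.Primes => 1 / ((p : ℝ) * √(p : ℝ))) := by
  have h : Summable (fun n : ℕ => 1 / (n : ℝ) ^ (3 / 2 : ℝ)) :=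
    Real.summable_one_div_nat_rpow.2 (by norm_num)
  have h2 := h.comp_injective (i := fun p : Nat.Primes => (p : ℕ)) Subtype.val_injective
  refine h2.congr fun p => ?_
  have hp : (0:ℝ) < (p : ℕ) := by exact_mod_cast p.2.pos
  simp only [Function.comp]
  rw [show (3 / 2 : ℝ) = 1 + 1 / 2 by norm_num, Real.rpow_add hp, Real.rpow_one, Real.sqrt_eq_rpow]

lemma prod_bound (B : ℝ) (hB : 0 ≤ B) : ∃ C : ℝ, 0 < C ∧ ∀ P : Finset Nat.Primes,
    ∏ p ∈ P, (1 + B / ((p : ℝ) * √(p : ℝ))) ≤ C := by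
  refine ⟨Real.exp (B * ∑' p : Nat.Primes, 1 / ((p : ℝ) * √(p : ℝ))), Real.exp_pos _, fun P => ?_⟩
  calc ∏ p ∈ P, (1 + B / ((p : ℝ) * √(p : ℝ)))
      ≤ ∏ p ∈ P, Real.exp (B * (1 / ((p : ℝ) * √(p : ℝ)))) := by
        refine Finset.prod_le_prod (fun p _ => by positivity) fun p _ => ?_
        rw [mul_one_div, add_comm]
        exact Real.add_one_le_exp _
    _ = Real.exp (B * ∑ p ∈ P, (1 / ((p : ℝ) * √(p : ℝ)))) := by
        rw [← Real.exp_sum, Finset.mul_sum]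
    _ ≤ _ := by
        refine Real.exp_le_exp.2 (mul_le_mul_of_nonneg_left ?_ hB)
        exact summable_pp.sum_le_tsum _ fun p _ => by positivity

lemma omega_bound (ε : ℝ) (hε : 0 < ε) : ∃ C : ℝ, 1 ≤ C ∧ ∀ (P : Finset Nat.Primes) (a d h : ℕ),
    a ≠ d → a ≤ h → d ≤ h →
    ∏ p ∈ P, (if a % (p : ℕ) = d % p then (3:ℝ) else 1) ≤ C * (h : ℝ) ^ ε := by
  obtain ⟨M, hM⟩ := exists_nat_ge ((3:ℝ) ^ (1 / ε))
  refine ⟨3 ^ (M + 1), one_le_pow₀ (by norm_num), fun P a d h had ha hd => ?_⟩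
  rw [← Finset.prod_filter]
  set Q := P.filter (fun p : Nat.Primes => a % (p : ℕ) = d % p) with hQ
  have h1 : ∏ p ∈ Q, (3:ℝ) ≤ ∏ p ∈ Q, ((if (p : ℕ) ≤ M then (3:ℝ) else 1) * ((p : ℕ) : ℝ) ^ ε) := by
    refine Finset.prod_le_prod (fun _ _ => by norm_num) fun p _ => ?_
    have hp : (1:ℝ) ≤ (p : ℕ) := by exact_mod_cast p.2.one_le
    split_ifs with hpM
    · have := Real.one_le_rpow hp hε.le
      linarith
    · have h2 : (3:ℝ) ^ (1 / ε) ≤ (p : ℕ) := hM.trans (by exact_mod_cast (not_le.1 hpM).le)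
      have h3 := Real.rpow_le_rpow (by positivity) h2 hε.le
      rw [← Real.rpow_mul (by norm_num), one_div_mul_cancel hε.ne', Real.rpow_one] at h3
      linarith
  refine h1.trans ?_
  rw [Finset.prod_mul_distrib]
  have h2 : ∏ p ∈ Q, (if (p : ℕ) ≤ M then (3:ℝ) else 1) ≤ 3 ^ (M + 1) := by
    rw [← Finset.prod_filter, Finset.prod_const]
    refine pow_le_pow_right₀ (by norm_num) ?_
    rw [← Finset.card_range (M + 1)]
    refine Finset.card_le_card_of_injOn (fun p : Nat.Primes => (p : ℕ)) ?_
      (Subtype.val_injective.injOn)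
    intro p hp
    simp only [Finset.coe_filter, Set.mem_ofPred_eq] at hp
    simpa using Nat.lt_succ_of_le hp.2
  have h3 : ∏ p ∈ Q, ((p : ℕ) : ℝ) ^ ε ≤ (h : ℝ) ^ ε := by
    rw [Real.finsetProd_rpow _ _ (fun p _ => by positivity)]
    refine Real.rpow_le_rpow (by positivity) ?_ hε.le
    have hdvd : ∏ p ∈ Q, (p : ℕ) ∣ ((d : ℤ) - a).natAbs := by
      refine Finset.prod_dvd_of_isRelPrime ?_ ?_
      · intro p _ q _ hpq
        exact Nat.coprime_iff_isRelPrime.1 ((Nat.coprime_primes p.2 q.2).2 fun e => hpq (Subtype.ext e))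
      · intro p hp
        have := (Finset.mem_filter.1 hp).2
        have h4 : a ≡ d [MOD p] := this
        exact Int.natCast_dvd.1 ((Nat.modEq_iff_dvd).1 h4)
    have hle := Nat.le_of_dvd (by omega) hdvd
    have : ∏ p ∈ Q, (p : ℕ) ≤ h := by omega
    exact_mod_cast this
  exact mul_le_mul h2 h3 (Finset.prod_nonneg fun _ _ => by positivity) (by positivity)

lemma bad_bound (K : ℕ) (ε : ℝ) (hε : 0 < ε) : ∃ C : ℝ, 1 ≤ C ∧
    ∀ (A : Finset ℕ) (P : Finset Nat.Primes) (d h : ℕ),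
    A.card = K → 1 ≤ h → d ∉ A → (∀ a ∈ A, a ≤ h) → d ≤ h →
    ∏ p ∈ P, (if d % (p : ℕ) ∈ A.image (· % (p : ℕ)) then (3:ℝ) else 1) ≤ C * (h : ℝ) ^ ε := by
  obtain ⟨C, hC, hb⟩ := omega_bound (ε / (K + 1)) (by positivity)
  refine ⟨C ^ K, one_le_pow₀ hC, fun A P d h hK hh hdA hA hd => ?_⟩
  have hh' : (1:ℝ) ≤ h := by exact_mod_cast hh
  have h1 : ∏ p ∈ P, (if d % (p : ℕ) ∈ A.image (· % (p : ℕ)) then (3:ℝ) else 1)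
      ≤ ∏ p ∈ P, ∏ a ∈ A, (if a % (p : ℕ) = d % p then (3:ℝ) else 1) := by
    refine Finset.prod_le_prod (fun p _ => by split_ifs <;> norm_num) fun p _ => ?_
    have h1 : ∀ a ∈ A, (1:ℝ) ≤ (if a % (p : ℕ) = d % p then (3:ℝ) else 1) := by
      intro a _; split_ifs <;> norm_num
    split_ifs with hbad
    · obtain ⟨a, ha, hae⟩ := Finset.mem_image.1 hbad
      rw [← Finset.mul_prod_erase _ _ ha, if_pos hae]
      have : (1:ℝ) ≤ ∏ a ∈ A.erase a, (if a % (p : ℕ) = d % p then (3:ℝ) else 1) :=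
        one_le_prod_real fun a ha => h1 a (Finset.mem_of_mem_erase ha)
      linarith
    · exact one_le_prod_real h1
  refine h1.trans ?_
  rw [Finset.prod_comm]
  calc _ ≤ ∏ a ∈ A, (C * (h : ℝ) ^ (ε / (K + 1))) := by
        refine Finset.prod_le_prod (fun a _ => Finset.prod_nonneg fun p _ => by
          split_ifs <;> norm_num) fun a ha => ?_
        exact hb P a d h (fun e => hdA (e ▸ ha)) (hA a ha) hd
    _ = C ^ K * ((h : ℝ) ^ (ε / (K + 1))) ^ K := by
        rw [Finset.prod_const, hK, mul_pow]
    _ ≤ _ := by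
        refine mul_le_mul_of_nonneg_left ?_ (by positivity)
        rw [← Real.rpow_natCast, ← Real.rpow_mul (by positivity)]
        refine Real.rpow_le_rpow_of_exponent_le hh' ?_
        rw [div_mul_eq_mul_div, div_le_iff₀ (by positivity)]
        nlinarith

lemma min_trick (x a b w l : ℝ) (ha : 0 ≤ a) (hb : 0 ≤ b) (hw : 0 < w) (hl : 0 < l)
    (h1 : x ≤ a) (h2 : x ≤ b) : x ≤ l * (a / w) + b * w / l := by
  rcases le_total w l with h | h
  · have : a ≤ l * (a / w) := by
      rw [← mul_div_assoc, le_div_iff₀ hw]; nlinarith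
    have : 0 ≤ b * w / l := by positivity
    linarith
  · have : b ≤ b * w / l := by
      rw [le_div_iff₀ hl]; nlinarith
    have : 0 ≤ l * (a / w) := by positivity
    linarith

lemma finite_main (K : ℕ) (hK : 1 ≤ K) (ε : ℝ) (hε : 0 < ε) : ∃ C : ℝ, 0 < C ∧
    ∀ (A : Finset ℕ) (P : Finset Nat.Primes) (h H : ℕ), A.card = K → 1 ≤ H → H ≤ h →
    (∀ a ∈ A, a ≤ h) → (∀ p : Nat.Primes, nu A p < p) →
    |∑ d ∈ range H \ A, ∏ p ∈ P, (1 + ff A p d) - H| ≤ C * √H * (h : ℝ) ^ ε := by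
  obtain ⟨C1, hC1, hb1⟩ := prod_bound (4 * K) (by positivity)
  obtain ⟨C2, hC2, hb2⟩ := prod_bound (2 * K * (K + 1)) (by positivity)
  obtain ⟨C3, hC3, hb3⟩ := bad_bound K ε hε
  refine ⟨(K + 1) * C1 + C2 * C3 + K, by positivity, fun A P h H hA hH hHh hAh hn => ?_⟩
  have hH' : (1:ℝ) ≤ H := by exact_mod_cast hH
  have hh' : (1:ℝ) ≤ h := by exact_mod_cast hH.trans hHh
  have hs : (1:ℝ) ≤ √H := Real.one_le_sqrt.2 hH'
  have hss : √(H:ℝ) * √(H:ℝ) = H := Real.mul_self_sqrt (by positivity)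
  have hhe : (1:ℝ) ≤ (h : ℝ) ^ ε := Real.one_le_rpow hh' hε.le
  have hpos : ∀ p : Nat.Primes, (0:ℝ) < (p : ℕ) := fun p => by exact_mod_cast p.2.pos
  -- expand
  have e1 : ∑ d ∈ range H \ A, ∏ p ∈ P, (1 + ff A p d)
      = ∑ t ∈ P.powerset, ∑ d ∈ range H \ A, ∏ p ∈ t, ff A p d := by
    rw [Finset.sum_comm]
    refine Finset.sum_congr rfl fun d _ => ?_
    rw [Finset.prod_one_add]
  have e2 := Finset.add_sum_erase P.powerset (fun t => ∑ d ∈ range H \ A, ∏ p ∈ t, ff A p d)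
    (Finset.empty_mem_powerset P)
  have e3 : ∑ d ∈ range H \ A, ∏ p ∈ (∅ : Finset Nat.Primes), ff A p d = #(range H \ A) := by simp
  have c1 : (#(range H \ A) : ℝ) ≤ H := by
    have := Finset.card_le_card (Finset.sdiff_subset : range H \ A ⊆ range H)
    rw [Finset.card_range] at this
    exact_mod_cast this
  have c2 : (H : ℝ) ≤ #(range H \ A) + K := by
    have := Finset.le_card_sdiff A (range H)
    rw [Finset.card_range, hA] at this
    have : H ≤ #(range H \ A) + K := by omega
    exact_mod_cast this
  -- each term
  have b1 : ∀ t ∈ P.powerset.erase ∅, |∑ d ∈ range H \ A, ∏ p ∈ t, ff A p d|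
      ≤ √H * ((K + 1) * ∏ p ∈ t, (4 * K / ((p : ℝ) * √(p : ℝ))))
        + (∑ d ∈ range H \ A, ∏ p ∈ t, (|ff A p d| * √(p : ℝ))) / √H := by
    intro t ht
    have hne : t.Nonempty := Finset.nonempty_iff_ne_empty.2 (Finset.ne_of_mem_erase ht)
    have u1 := period_bound' A (by omega) hn t hne H
    have u2 : |∑ d ∈ range H \ A, ∏ p ∈ t, ff A p d| ≤ ∑ d ∈ range H \ A, ∏ p ∈ t, |ff A p d| := by
      simp only [← Finset.abs_prod]
      exact Finset.abs_sum_le_sum_abs _ _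
    have u3 := min_trick _ _ _ (∏ p ∈ t, √(p : ℝ)) (√H)
      (mul_nonneg (by positivity) (Finset.prod_nonneg fun p _ => by positivity))
      (Finset.sum_nonneg fun d _ => Finset.prod_nonneg fun p _ => abs_nonneg _)
      (Finset.prod_pos fun p _ => Real.sqrt_pos.2 (hpos p)) (by positivity) u1 u2
    refine u3.trans (le_of_eq ?_)
    rw [mul_div_assoc, ← Finset.prod_div_distrib, Finset.sum_mul]
    simp only [← Finset.prod_mul_distrib, div_div, hA]
  have b2 : ∑ t ∈ P.powerset.erase ∅, |∑ d ∈ range H \ A, ∏ p ∈ t, ff A p d|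
      ≤ ∑ t ∈ P.powerset, (√H * ((K + 1) * ∏ p ∈ t, (4 * K / ((p : ℝ) * √(p : ℝ))))
        + (∑ d ∈ range H \ A, ∏ p ∈ t, (|ff A p d| * √(p : ℝ))) / √H) := by
    refine (Finset.sum_le_sum b1).trans ?_
    refine Finset.sum_le_sum_of_subset_of_nonneg (Finset.erase_subset _ _) fun t _ _ => ?_
    refine add_nonneg ?_ ?_
    · exact mul_nonneg (by positivity) (mul_nonneg (by positivity)
        (Finset.prod_nonneg fun p _ => by positivity))
    · exact div_nonneg (Finset.sum_nonneg fun d _ => Finset.prod_nonneg fun p _ => by positivity)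
        (by positivity)
  have b3 : ∑ t ∈ P.powerset, (√H * ((K + 1) * ∏ p ∈ t, (4 * K / ((p : ℝ) * √(p : ℝ))))
        + (∑ d ∈ range H \ A, ∏ p ∈ t, (|ff A p d| * √(p : ℝ))) / √H)
      = √H * ((K + 1) * ∏ p ∈ P, (1 + 4 * K / ((p : ℝ) * √(p : ℝ))))
        + (∑ d ∈ range H \ A, ∏ p ∈ P, (1 + |ff A p d| * √(p : ℝ))) / √H := by
    simp only [Finset.prod_one_add]
    rw [Finset.sum_add_distrib, ← Finset.mul_sum, ← Finset.mul_sum, ← Finset.sum_div,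
      Finset.sum_comm]
  have b4 : ∀ d ∈ range H \ A, ∏ p ∈ P, (1 + |ff A p d| * √(p : ℝ)) ≤ C2 * (C3 * (h:ℝ) ^ ε) := by
    intro d hd
    rw [Finset.mem_sdiff, Finset.mem_range] at hd
    have v := hb3 A P d h hA (hH.trans hHh) hd.2 hAh (by omega)
    calc ∏ p ∈ P, (1 + |ff A p d| * √(p : ℝ))
        ≤ ∏ p ∈ P, ((1 + 2 * K * (K + 1) / ((p : ℝ) * √(p : ℝ))) *
          (if d % (p : ℕ) ∈ A.image (· % (p : ℕ)) then (3:ℝ) else 1)) := by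
          refine Finset.prod_le_prod (fun p _ => by positivity) fun p _ => ?_
          have hp1 : (1:ℝ) ≤ (p : ℕ) := by exact_mod_cast p.2.one_le
          have hp0 := hpos p
          have hsp : (1:ℝ) ≤ √(p : ℕ) := Real.one_le_sqrt.2 hp1
          have hspp : √(p:ℝ) * √(p:ℝ) = p := Real.mul_self_sqrt hp0.le
          split_ifs with hbad
          · have := ff_bad A p d p.2.two_le hbad
            have h2 : |ff A p d| * √(p : ℝ) ≤ 2 := by
              calc _ ≤ 2 / (p : ℝ) * √(p : ℝ) := by gcongr
                _ ≤ 2 := by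
                  rw [div_mul_eq_mul_div, div_le_iff₀ hp0]; nlinarith
            have : 0 ≤ 2 * K * (K + 1) / ((p : ℝ) * √(p : ℝ)) := by positivity
            linarith
          · have := ff_good A p d p.2.two_le (hn p) hbad
            rw [hA] at this
            have h2 : |ff A p d| * √(p : ℝ) ≤ 2 * K * (K + 1) / ((p : ℝ) * √(p : ℝ)) := by
              calc _ ≤ (2 * K * (K + 1) / ((p:ℝ) * p)) * √(p : ℝ) := by gcongr
                _ = _ := by
                  have : √(p:ℝ) ≠ 0 := by positivity
                  nth_rewrite 2 [← hspp]
                  field_simp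
            linarith
      _ ≤ _ := by
          rw [Finset.prod_mul_distrib]
          refine mul_le_mul (hb2 P) v (Finset.prod_nonneg fun p _ => ?_) hC2.le
          split_ifs <;> norm_num
  have b5 : ∑ d ∈ range H \ A, ∏ p ∈ P, (1 + |ff A p d| * √(p : ℝ)) ≤ H * (C2 * (C3 * (h:ℝ) ^ ε)) := by
    refine (Finset.sum_le_sum b4).trans ?_
    rw [Finset.sum_const, nsmul_eq_mul]
    exact mul_le_mul_of_nonneg_right c1 (by positivity)
  have b6 : (∑ d ∈ range H \ A, ∏ p ∈ P, (1 + |ff A p d| * √(p : ℝ))) / √H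
      ≤ √H * (C2 * (C3 * (h:ℝ) ^ ε)) := by
    rw [div_le_iff₀ (by positivity)]
    calc _ ≤ _ := b5
      _ = _ := by nth_rewrite 1 [← hss]; ring
  have b7 : √H * ((K + 1) * ∏ p ∈ P, (1 + 4 * K / ((p : ℝ) * √(p : ℝ)))) ≤ √H * ((K + 1) * C1) := by
    gcongr
    exact hb1 P
  have b8 := Finset.abs_sum_le_sum_abs (fun t : Finset Nat.Primes => ∑ d ∈ range H \ A, ∏ p ∈ t, ff A p d)
    (P.powerset.erase ∅)
  have b9 : |∑ t ∈ P.powerset.erase ∅, ∑ d ∈ range H \ A, ∏ p ∈ t, ff A p d|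
      ≤ √H * ((K + 1) * C1) + √H * (C2 * (C3 * (h:ℝ) ^ ε)) := by
    linarith [b8, b2, b3.le, b6, b7]
  have b10 : √H * ((K + 1) * C1) ≤ √H * ((K + 1) * C1) * (h:ℝ) ^ ε :=
    le_mul_of_one_le_right (by positivity) hhe
  have b11 : (K:ℝ) ≤ K * (√H * (h:ℝ) ^ ε) :=
    le_mul_of_one_le_right (by positivity) (one_le_mul_of_one_le_of_one_le hs hhe)
  rw [e1, ← e2, e3]
  rw [abs_le] at b9 ⊢
  constructor <;> nlinarith [b9.1, b9.2]

lemma pow_upper (x : ℝ) (h0 : 0 ≤ x) (h1 : x ≤ 1) (K : ℕ) :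
    (1 - x) ^ K ≤ 1 - K * x + K ^ 2 * x ^ 2 := by
  induction K with
  | zero => simp
  | succ K ih =>
    have h2 : 0 ≤ 1 - x := by linarith
    have h3 := mul_le_mul_of_nonneg_right ih h2
    rw [pow_succ]
    push_cast
    have : 0 ≤ (K:ℝ) ^ 2 * x ^ 3 := by positivity
    have : 0 ≤ (K:ℝ) * x ^ 2 := by positivity
    nlinarith

lemma fac_close (A : Finset ℕ) (p : ℕ) (hp : 2 ≤ p) (hA : ∀ a ∈ A, a < p) :
    |fac A p - 1| ≤ 2 ^ A.card * (A.card : ℝ) ^ 2 * (1 / (p : ℝ) ^ 2) := by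
  have hp' : (2 : ℝ) ≤ p := by exact_mod_cast hp
  have hnu : nu A p = A.card := by
    unfold nu
    refine Finset.card_image_of_injOn fun a ha b hb hab => ?_
    simpa [Nat.mod_eq_of_lt (hA a ha), Nat.mod_eq_of_lt (hA b hb)] using hab
  unfold fac
  rw [hnu]
  set K := A.card
  set x : ℝ := 1 / (p : ℝ) with hx
  have hx0 : 0 ≤ x := by positivity
  have hx1 : x ≤ 1 / 2 := by
    rw [hx]; exact one_div_le_one_div_of_le (by norm_num) hp'
  have e : (K : ℝ) / p = K * x := by rw [hx]; ring
  have e' : 1 / (p : ℝ) ^ 2 = x ^ 2 := by rw [hx]; ring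
  rw [e, e']
  have hl : 1 - K * x ≤ (1 - x) ^ K := by
    have := one_add_mul_le_pow (a := -x) (by linarith) K
    simpa [sub_eq_add_neg] using this
  have hu := pow_upper x hx0 (by linarith) K
  have hy : (1 / 2 : ℝ) ^ K ≤ (1 - x) ^ K := pow_le_pow_left₀ (by norm_num) (by linarith) K
  have hy0 : 0 < (1 - x) ^ K := pow_pos (by linarith) _
  have e2 : ((1 - x) ^ K)⁻¹ * (1 - K * x) - 1 = -(((1 - x) ^ K - (1 - K * x)) / (1 - x) ^ K) := by
    field_simp
    ring
  rw [e2, abs_neg, abs_of_nonneg (div_nonneg (by linarith) hy0.le), div_le_iff₀ hy0]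
  have h2 : (1:ℝ) ≤ 2 ^ K * (1 - x) ^ K := by
    calc (1:ℝ) = 2 ^ K * (1 / 2) ^ K := by rw [← mul_pow]; norm_num
      _ ≤ _ := by gcongr
  have h3 : 0 ≤ (K:ℝ) ^ 2 * x ^ 2 := by positivity
  nlinarith [mul_le_mul_of_nonneg_left h2 h3]

lemma fac_multipliable (A : Finset ℕ) : Multipliable (fun p : Nat.Primes => fac A p) := by
  have h : Summable (fun p : Nat.Primes => fac A p - 1) := by
    have hs : Summable (fun n : ℕ => 1 / (n : ℝ) ^ 2) :=
      Real.summable_one_div_nat_pow.2 (by norm_num)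
    have hs2 := (hs.comp_injective (i := fun p : Nat.Primes => (p : ℕ))
      Subtype.val_injective).mul_left (2 ^ A.card * (A.card : ℝ) ^ 2)
    refine Summable.of_norm_bounded_eventually hs2 ?_
    have hfin : Set.Finite {p : Nat.Primes | (p : ℕ) ≤ A.sup id} := by
      refine Set.Finite.of_finite_image (f := fun p : Nat.Primes => (p : ℕ)) ?_
        (Subtype.val_injective.injOn)
      refine (Set.finite_Iic (A.sup id)).subset ?_
      rintro _ ⟨p, hp, rfl⟩
      exact hp
    filter_upwards [hfin.compl_mem_cofinite] with p hp
    refine fac_close A p p.2.two_le fun a ha => ?_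
    have h1 : a ≤ A.sup id := Finset.le_sup (f := id) ha
    have h2 : ¬ ((p : ℕ) ≤ A.sup id) := hp
    omega
  have := Real.multipliable_one_add_of_summable h
  simpa using this

lemma sing_tendsto (A : Finset ℕ) :
    Filter.Tendsto (fun P : Finset Nat.Primes => ∏ p ∈ P, fac A p) Filter.atTop
      (nhds (singSeries A)) := (fac_multipliable A).hasProd

lemma sing_nonneg (A : Finset ℕ) : 0 ≤ singSeries A :=
  ge_of_tendsto' (sing_tendsto A) fun P => Finset.prod_nonneg fun p _ => fac_nonneg A p p.2.two_le

lemma one_var (K : ℕ) (hK : 1 ≤ K) (ε : ℝ) (hε : 0 < ε) : ∃ C : ℝ, 0 < C ∧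
    ∀ (A : Finset ℕ) (h H : ℕ), A.card = K → 1 ≤ H → H ≤ h → (∀ a ∈ A, a ≤ h) →
    |∑ d ∈ range H \ A, singSeries (insert d A) - singSeries A * H|
      ≤ singSeries A * (C * √H * (h : ℝ) ^ ε) := by
  obtain ⟨C, hC, hb⟩ := finite_main K hK ε hε
  refine ⟨C, hC, fun A h H hA hH hHh hAh => ?_⟩
  have t1 : Filter.Tendsto (fun P : Finset Nat.Primes =>
      |∑ d ∈ range H \ A, ∏ p ∈ P, fac (insert d A) p - (∏ p ∈ P, fac A p) * H|) Filter.atTop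
      (nhds |∑ d ∈ range H \ A, singSeries (insert d A) - singSeries A * H|) :=
    ((tendsto_finsetSum _ fun d _ => sing_tendsto (insert d A)).sub
      ((sing_tendsto A).mul_const _)).abs
  have t2 := (sing_tendsto A).mul_const (C * √H * (h : ℝ) ^ ε)
  refine le_of_tendsto_of_tendsto t1 t2 ?_
  by_cases hn : ∀ p : Nat.Primes, nu A p < p
  · refine Filter.Eventually.of_forall fun P => ?_
    have e : ∑ d ∈ range H \ A, ∏ p ∈ P, fac (insert d A) p
        = (∏ p ∈ P, fac A p) * ∑ d ∈ range H \ A, ∏ p ∈ P, (1 + ff A p d) := by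
      rw [Finset.mul_sum]
      refine Finset.sum_congr rfl fun d hd => ?_
      rw [← Finset.prod_mul_distrib]
      exact Finset.prod_congr rfl fun p _ =>
        fac_insert A p d p.2.two_le (Finset.mem_sdiff.1 hd).2 (hn p)
    have h0 : 0 ≤ ∏ p ∈ P, fac A p := Finset.prod_nonneg fun p _ => fac_nonneg A p p.2.two_le
    simp only []
    rw [e, ← mul_sub, abs_mul, abs_of_nonneg h0]
    exact mul_le_mul_of_nonneg_left (hb A P h H hA hH hHh hAh hn) h0
  · push Not at hn
    obtain ⟨p, hp⟩ := hn
    have hp' : nu A p = p := le_antisymm (nu_le A p p.2.pos) hp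
    filter_upwards [Filter.eventually_ge_atTop ({p} : Finset Nat.Primes)] with P hP
    have hpP : p ∈ P := hP (Finset.mem_singleton_self p)
    have z1 : ∏ p ∈ P, fac A p = 0 := Finset.prod_eq_zero hpP (fac_zero A p p.2.two_le hp')
    have z2 : ∀ d, ∏ p ∈ P, fac (insert d A) p = 0 := fun d =>
      Finset.prod_eq_zero hpP (fac_insert_zero A p d p.2.two_le hp')
    simp [z1, z2]

lemma powerset_step (U : Finset ℕ) (j : ℕ) (F : Finset ℕ → ℝ) :
    ((j : ℝ) + 1) * ∑ s ∈ U.powersetCard (j + 1), F s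
      = ∑ s ∈ U.powersetCard j, ∑ d ∈ U \ s, F (insert d s) := by
  have h1 : ((j : ℝ) + 1) * ∑ s ∈ U.powersetCard (j + 1), F s
      = ∑ s ∈ U.powersetCard (j + 1), ∑ d ∈ s, F s := by
    rw [Finset.mul_sum]
    refine Finset.sum_congr rfl fun s hs => ?_
    rw [Finset.sum_const, (Finset.mem_powersetCard.1 hs).2, nsmul_eq_mul]
    push_cast; ring
  rw [h1, Finset.sum_sigma', Finset.sum_sigma']
  refine Finset.sum_bij' (fun x _ => ⟨x.1.erase x.2, x.2⟩) (fun x _ => ⟨insert x.2 x.1, x.2⟩)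
    ?_ ?_ ?_ ?_ ?_
  · rintro ⟨s, d⟩ hx
    simp only [Finset.mem_sigma, Finset.mem_powersetCard, Finset.mem_sdiff] at hx ⊢
    obtain ⟨⟨h1, h2⟩, h3⟩ := hx
    refine ⟨⟨(Finset.erase_subset _ _).trans h1, ?_⟩, h1 h3, Finset.notMem_erase _ _⟩
    rw [Finset.card_erase_of_mem h3, h2]; rfl
  · rintro ⟨s, d⟩ hx
    simp only [Finset.mem_sigma, Finset.mem_powersetCard, Finset.mem_sdiff] at hx ⊢
    obtain ⟨⟨h1, h2⟩, h3, h4⟩ := hx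
    refine ⟨⟨Finset.insert_subset h3 h1, ?_⟩, Finset.mem_insert_self _ _⟩
    rw [Finset.card_insert_of_notMem h4, h2]
  · rintro ⟨s, d⟩ hx
    simp only [Finset.mem_sigma] at hx
    simp [Finset.insert_erase hx.2]
  · rintro ⟨s, d⟩ hx
    simp only [Finset.mem_sigma, Finset.mem_sdiff] at hx
    simp [Finset.erase_insert hx.2.2]
  · rintro ⟨s, d⟩ hx
    simp only [Finset.mem_sigma] at hx
    simp [Finset.insert_erase hx.2]

lemma iterate (j : ℕ) : ∀ ε : ℝ, 0 < ε → ∃ C : ℝ, 0 < C ∧ ∀ (D H : ℕ), 1 ≤ H → H ≤ D →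
    |(∑ s ∈ (Finset.Ioo 0 H).powersetCard j, singSeries (insert 0 (insert D s))) -
      singSeries {0, D} * ((H : ℝ) ^ j / (j.factorial : ℝ))| ≤
      singSeries {0, D} * ((H : ℝ) ^ j / (j.factorial : ℝ)) * (C * ((D : ℝ) ^ ε / √H)) := by
  induction j with
  | zero =>
    intro ε hε
    refine ⟨1, one_pos, fun D H hH hD => ?_⟩
    have := sing_nonneg {0, D}
    simp only [Finset.powersetCard_zero, Finset.sum_singleton]
    have e : insert 0 (insert D (∅ : Finset ℕ)) = {0, D} := rfl
    rw [e]
    simp only [pow_zero, Nat.factorial_zero, Nat.cast_one, div_one, mul_one, sub_self, abs_zero]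
    positivity
  | succ j ih =>
    intro ε hε
    obtain ⟨C1, hC1, h1⟩ := ih (ε / 2) (by positivity)
    obtain ⟨C2, hC2, h2⟩ := one_var (j + 2) (by omega) (ε / 2) (by positivity)
    refine ⟨C1 + C2 + C1 * C2, by positivity, fun D H hH hD => ?_⟩
    have hH' : (1:ℝ) ≤ H := by exact_mod_cast hH
    have hD' : (1:ℝ) ≤ D := by exact_mod_cast hH.trans hD
    have hs : (1:ℝ) ≤ √H := Real.one_le_sqrt.2 hH'
    have hss : √(H:ℝ) * √(H:ℝ) = H := Real.mul_self_sqrt (by positivity)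
    have g1 := h1 D H hH hD
    set S := singSeries {0, D}
    have hS : 0 ≤ S := sing_nonneg _
    set T := ∑ s ∈ (Finset.Ioo 0 H).powersetCard j, singSeries (insert 0 (insert D s)) with hT
    set T' := ∑ s ∈ (Finset.Ioo 0 H).powersetCard (j + 1), singSeries (insert 0 (insert D s))
      with hT'
    set e := (D : ℝ) ^ (ε / 2) with he
    have he1 : 1 ≤ e := Real.one_le_rpow hD' (by positivity)
    have hee : (D : ℝ) ^ ε = e * e := by
      rw [he, ← Real.rpow_add (by linarith)]; congr 1; ring
    have step : ((j : ℝ) + 1) * T' = ∑ s ∈ (Finset.Ioo 0 H).powersetCard j,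
        ∑ d ∈ range H \ (insert 0 (insert D s)), singSeries (insert d (insert 0 (insert D s))) := by
      rw [hT', powerset_step (Finset.Ioo 0 H) j (fun s => singSeries (insert 0 (insert D s)))]
      refine Finset.sum_congr rfl fun s hs => ?_
      have hset : Finset.Ioo 0 H \ s = range H \ (insert 0 (insert D s)) := by
        ext x
        simp only [Finset.mem_sdiff, Finset.mem_Ioo, Finset.mem_range, Finset.mem_insert, not_or]
        constructor
        · rintro ⟨⟨a, b⟩, c⟩
          exact ⟨b, by omega, by omega, c⟩
        · rintro ⟨a, b, _, c⟩
          exact ⟨⟨by omega, a⟩, c⟩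
      rw [hset]
      refine Finset.sum_congr rfl fun d _ => ?_
      rw [Finset.insert_comm d 0, Finset.insert_comm d D]
    have g2 : |((j : ℝ) + 1) * T' - T * H| ≤ T * (C2 * √H * e) := by
      rw [step, hT, Finset.sum_mul, Finset.sum_mul, ← Finset.sum_sub_distrib]
      refine (Finset.abs_sum_le_sum_abs _ _).trans (Finset.sum_le_sum fun s hs => ?_)
      rw [Finset.mem_powersetCard] at hs
      have n1 : D ∉ s := fun hm => by
        have := Finset.mem_Ioo.1 (hs.1 hm); omega
      have n2 : 0 ∉ insert D s := fun hm => by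
        rcases Finset.mem_insert.1 hm with hm | hm
        · omega
        · have := Finset.mem_Ioo.1 (hs.1 hm); omega
      refine h2 _ D H ?_ hH hD ?_
      · rw [Finset.card_insert_of_notMem n2, Finset.card_insert_of_notMem n1, hs.2]
      · intro a ha
        simp only [Finset.mem_insert] at ha
        rcases ha with rfl | rfl | ha
        · omega
        · exact le_rfl
        · have := Finset.mem_Ioo.1 (hs.1 ha); omega
    set M := S * ((H : ℝ) ^ j / (j.factorial : ℝ)) with hM
    have hM0 : 0 ≤ M := by positivity
    have hM' : S * ((H : ℝ) ^ (j + 1) / ((j + 1).factorial : ℝ)) = M * H / (j + 1) := by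
      rw [hM, Nat.factorial_succ, pow_succ]
      push_cast
      field_simp
    rw [hM', hee]
    have hj : (0:ℝ) < j + 1 := by positivity
    set δ := e / √H with hδ
    have hδ0 : 0 < δ := by positivity
    have w1 : e * e / √H = e * δ := by rw [hδ]; ring
    have w2 : C2 * √H * e = H * (C2 * δ) := by
      rw [hδ]; nth_rewrite 2 [← hss]; field_simp
    have w3 : δ ≤ e * δ := le_mul_of_one_le_left hδ0.le he1
    have w4 : δ * δ ≤ e * δ := by
      refine mul_le_mul_of_nonneg_right ?_ hδ0.le
      exact div_le_self (by linarith) hs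
    rw [w2] at g2
    rw [w1]
    have hTM : T ≤ M * (1 + C1 * δ) := by
      have := (abs_le.1 g1).2
      linarith
    have g3 : |((j : ℝ) + 1) * T' - M * H| ≤ M * H * ((C1 + C2 + C1 * C2) * (e * δ)) := by
      calc |((j : ℝ) + 1) * T' - M * H| = |(((j : ℝ) + 1) * T' - T * H) + (T - M) * H| := by
            congr 1; ring
        _ ≤ |((j : ℝ) + 1) * T' - T * H| + |(T - M) * H| := abs_add_le _ _
        _ ≤ T * (H * (C2 * δ)) + M * (C1 * δ) * H := by
            rw [abs_mul, abs_of_nonneg (by linarith : (0:ℝ) ≤ H)]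
            gcongr
        _ ≤ M * (1 + C1 * δ) * (H * (C2 * δ)) + M * (C1 * δ) * H := by gcongr
        _ = M * H * ((C1 + C2) * δ + C1 * C2 * (δ * δ)) := by ring
        _ ≤ M * H * ((C1 + C2) * (e * δ) + C1 * C2 * (e * δ)) := by gcongr
        _ = _ := by ring
    have e5 : T' - M * H / (j + 1) = (((j : ℝ) + 1) * T' - M * H) / (j + 1) := by
      field_simp
    rw [e5, abs_div, abs_of_pos hj, div_mul_eq_mul_div]
    gcongr

/-- `∑_{1≤d_1<⋯<d_{k-2}<H} S({0,d_1,…,d_{k-2},D})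
 = S({0,D}) H^{k-2}/(k-2)! (1 + O_k(D^ε/H^{1/2}))`. -/
theorem stmt13 (k : ℕ) (hk : 3 ≤ k) (ε : ℝ) (hε : 0 < ε) :
    ∃ C : ℝ, 0 < C ∧ ∀ (D H : ℕ), 1 ≤ H → H ≤ D →
      |(∑ s ∈ (Finset.Ioo 0 H).powersetCard (k - 2),
            singSeries (insert 0 (insert D s))) -
          singSeries {0, D} * (H : ℝ) ^ (k - 2) / (Nat.factorial (k - 2) : ℝ)| ≤
        C * |singSeries {0, D}| * (H : ℝ) ^ (k - 2) / (Nat.factorial (k - 2) : ℝ) *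
          (D : ℝ) ^ ε / Real.sqrt H := by
  obtain ⟨C, hC, h⟩ := iterate (k - 2) ε hε
  refine ⟨C, hC, fun D H hH hD => ?_⟩
  have := h D H hH hD
  rw [abs_of_nonneg (sing_nonneg {0, D}), mul_div_assoc]
  refine this.trans (le_of_eq ?_)
  ring
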